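/- For every CPL formula A there exists a named Boolean formula b_A such that for every finite name set X with FN(A) ∪ FN(b_A) ⊆ X, ⟦A⟧_X = ⟦b_A⟧_X; in particular every interpretation ⟦A⟧_X is a Borel-measurable subset of (2^ω)^X. -/

import Mathlib

open MeasureTheory

/-- The Cantor space `2^ω` of infinite binary sequences. -/
abbrev Cantor : Type := ℕ → Bool

/-- Rational numbers in the unit interval `[0,1]`. -/
abbrev I01 : Type := (Set.Icc (0 : ℚ) 1)

/-- The value of a rational `q ∈ [0,1]` as an extended nonnegative real. -/
noncomputable def qq (q : I01) : ENNReal := ENNReal.ofReal (q.1 : ℝ)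

/-- `μ` is the fair-coin Bernoulli (uniform) product measure on the Cantor space:
it is a probability measure giving each cylinder fixing the values on a finite set `s`
of coordinates the measure `2^{-|s|}`. -/
def IsCantorMeasure (μ : Measure Cantor) : Prop :=
  IsProbabilityMeasure μ ∧
    ∀ (s : Finset ℕ) (v : ℕ → Bool),
      μ {f : Cantor | ∀ i ∈ s, f i = v i} = (2 : ENNReal)⁻¹ ^ s.card

/-- Valuations of the names in a finite name set `X`: the space `(2^ω)^X`. -/
abbrev Val (X : Finset ℕ) : Type := {a : ℕ // a ∈ X} → Cantor

/-- `combine f g` is the common extension `f + g` of valuations `f ∈ (2^ω)^X` and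
`g ∈ (2^ω)^Y`: it agrees with `f` on `X` and with `g` on `Y` (when `X` and `Y` are
disjoint this is the `f + g` of the paper). -/
def combine {X Y : Finset ℕ} (f : Val X) (g : Val Y) : Val (X ∪ Y) :=
  fun a =>
    if h : a.1 ∈ Y then g ⟨a.1, h⟩
    else f ⟨a.1, (Finset.mem_union.mp a.2).resolve_right h⟩

/-- The `f`-projection `Π_f(𝒳) = {g ∈ (2^ω)^Y | f + g ∈ 𝒳}` of a set
`𝒳 ⊆ (2^ω)^{X∪Y}` along `f ∈ (2^ω)^X`. -/
def proj {X Y : Finset ℕ} (f : Val X) (S : Set (Val (X ∪ Y))) : Set (Val Y) :=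
  {g | combine f g ∈ S}

/-- The fair-coin Bernoulli (uniform) product measure on `(2^ω)^X`, obtained as the
pushforward of the Cantor measure `μ` along the (coordinate-separating) injection
determined by the pairing function: the coordinates `(a, i)` are i.i.d. fair coins. -/
noncomputable def cantorPi (μ : Measure Cantor) (X : Finset ℕ) : Measure (Val X) :=
  Measure.map (fun (g : Cantor) (a : {x : ℕ // x ∈ X}) (i : ℕ) => g (Nat.pair a.1 i)) μ

/-- Named Boolean formulas `b ::= xᵢᵃ | ⊤ | ⊥ | ¬b | b ∧ c | b ∨ c`.
`NBF.var i a` is the named propositional variable `xᵢᵃ`. -/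
inductive NBF : Type where
  | var : ℕ → ℕ → NBF
  | tt : NBF
  | ff : NBF
  | neg : NBF → NBF
  | conj : NBF → NBF → NBF
  | disj : NBF → NBF → NBF
deriving DecidableEq

/-- The set of (free) names occurring in a named Boolean formula. -/
def NBF.FN : NBF → Finset ℕ
  | .var _ a => {a}
  | .tt => ∅
  | .ff => ∅
  | .neg b => b.FN
  | .conj b c => b.FN ∪ c.FN
  | .disj b c => b.FN ∪ c.FN

/-- The interpretation `⟦b⟧_X ⊆ (2^ω)^X` of a named Boolean formula with `FN(b) ⊆ X`. -/
def NBF.semN : NBF → (X : Finset ℕ) → Set (Val X)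
  | .var i a, X => {f | ∀ h : a ∈ X, f ⟨a, h⟩ i = true}
  | .tt, _ => Set.univ
  | .ff, _ => ∅
  | .neg b, X => (b.semN X)ᶜ
  | .conj b c, X => b.semN X ∩ c.semN X
  | .disj b c, X => b.semN X ∪ c.semN X

/-- The disjunction `⋁_{i<k} c i` of a finite family of named Boolean formulas. -/
def NBF.bigDisj {k : ℕ} (c : Fin k → NBF) : NBF :=
  (List.ofFn c).foldr NBF.disj NBF.ff

/-- Formulas of (multivariate) counting propositional logic CPL:
`A ::= i_a | ¬A | A ∧ B | A ∨ B | C^q_a A | D^q_a A`, with `i ∈ ℕ`, `a` a name and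
`q` a rational in `[0,1]`.  `CPL.atom i a` is the named atom `i_a`, and
`CPL.cnt q a A` (resp. `CPL.dnt q a A`) is `C^q_a A` (resp. `D^q_a A`). -/
inductive CPL : Type where
  | atom : ℕ → ℕ → CPL
  | neg : CPL → CPL
  | conj : CPL → CPL → CPL
  | disj : CPL → CPL → CPL
  | cnt : I01 → ℕ → CPL → CPL
  | dnt : I01 → ℕ → CPL → CPL
deriving DecidableEq

/-- The set of free names of a CPL formula; `a` is bound in `C^q_a A` and `D^q_a A`. -/
def CPL.FN : CPL → Finset ℕ
  | .atom _ a => {a}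
  | .neg A => A.FN
  | .conj A B => A.FN ∪ B.FN
  | .disj A B => A.FN ∪ B.FN
  | .cnt _ a A => A.FN \ {a}
  | .dnt _ a A => A.FN \ {a}

/-- The interpretation `⟦A⟧_X ⊆ (2^ω)^X` of a CPL formula `A` with `FN(A) ⊆ X`:
`⟦C^q_a A⟧_X = {f | μ(Π_f(⟦A⟧_{X∪{a}})) ≥ q}` and
`⟦D^q_a A⟧_X = {f | μ(Π_f(⟦A⟧_{X∪{a}})) < q}`. -/
noncomputable def CPL.semN (μ : Measure Cantor) : CPL → (X : Finset ℕ) → Set (Val X)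
  | .atom i a, X => {f | ∀ h : a ∈ X, f ⟨a, h⟩ i = true}
  | .neg A, X => (CPL.semN μ A X)ᶜ
  | .conj A B, X => CPL.semN μ A X ∩ CPL.semN μ B X
  | .disj A B, X => CPL.semN μ A X ∪ CPL.semN μ B X
  | .cnt q a A, X =>
      {f | qq q ≤ cantorPi μ {a} (proj (Y := {a}) f (CPL.semN μ A (X ∪ {a})))}
  | .dnt q a A, X =>
      {f | cantorPi μ {a} (proj (Y := {a}) f (CPL.semN μ A (X ∪ {a}))) < qq q}

/-!
A Boolean formula reads only finitely many bits `(a, i)`, and conversely every predicate on bits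
that depends on finitely many of them is defined by a Boolean formula, by Shannon expansion.
Projecting away the names in `Y` and testing the resulting section in any way whatsoever keeps the
finite dependence and removes the bits of `Y`, so sets defined by Boolean formulas are closed under
the counting quantifiers.
-/

/-- Assignments of a bit to every pair `(a, i)` of a name and an index. Unlike `Val X` this space
does not vary with `X`, so that a formula has a single meaning, independent of the name set. -/
abbrev BitAssignment : Type := ℕ × ℕ → Bool

/-- The restriction of a bit assignment to the names in `X`. -/
def restrictVal (X : Finset ℕ) (v : BitAssignment) : Val X := fun a i => v (a, i)

/-- The bit assignment that agrees with `g` on the names in `Y` and with `v` elsewhere; it is the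
counterpart of `combine` for assignments to all names. -/
def overlay {Y : Finset ℕ} (v : BitAssignment) (g : Val Y) : BitAssignment :=
  fun p => if h : p.1 ∈ Y then g ⟨p.1, h⟩ p.2 else v p

theorem restrictVal_overlay {X : Finset ℕ} (v : BitAssignment) (f : Val X) :
    restrictVal X (overlay v f) = f := by
  funext a i
  simp [restrictVal, overlay]

theorem restrictVal_surjective (X : Finset ℕ) : Function.Surjective (restrictVal X) :=
  fun f => ⟨overlay (fun _ => false) f, restrictVal_overlay _ f⟩

theorem combine_restrictVal {X Y : Finset ℕ} (v : BitAssignment) (g : Val Y) :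
    combine (restrictVal X v) g = restrictVal (X ∪ Y) (overlay v g) := by
  funext a i
  by_cases h : a.1 ∈ Y <;> simp [combine, restrictVal, overlay, h]

theorem dependsOn_section {P : BitAssignment → Prop} {S : Finset (ℕ × ℕ)} (hP : DependsOn P S)
    {Y : Finset ℕ} {β : Type*} (Q : Set (Val Y) → β) :
    DependsOn (fun v => Q {g | P (overlay v g)}) (S.filter (·.1 ∉ Y)) := by
  refine fun v w h => congrArg Q (Set.ext fun g => iff_of_eq (hP fun p hp => ?_))
  by_cases hpY : p.1 ∈ Y
  · simp [overlay, hpY]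
  · simpa [overlay, hpY] using h p (by simpa [hpY] using hp)

namespace NBF

/-- Satisfaction of a named Boolean formula by an assignment of bits to all names. -/
def Holds : NBF → BitAssignment → Prop
  | .var i a, v => v (a, i) = true
  | .tt, _ => True
  | .ff, _ => False
  | .neg b, v => ¬ b.Holds v
  | .conj b c, v => b.Holds v ∧ c.Holds v
  | .disj b c, v => b.Holds v ∨ c.Holds v

/-- The bits `(a, i)` whose variable `xᵢᵃ` occurs in a named Boolean formula. -/
def bits : NBF → Finset (ℕ × ℕ)
  | .var i a => {(a, i)}
  | .tt => ∅
  | .ff => ∅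
  | .neg b => b.bits
  | .conj b c => b.bits ∪ c.bits
  | .disj b c => b.bits ∪ c.bits

theorem image_fst_bits (b : NBF) : b.bits.image Prod.fst = b.FN := by
  induction b <;> simp_all [bits, FN, Finset.image_union]

theorem restrictVal_mem_semN_iff {b : NBF} {X : Finset ℕ} (hX : b.FN ⊆ X) (v : BitAssignment) :
    restrictVal X v ∈ b.semN X ↔ b.Holds v := by
  induction b with
  | var i a => simp [semN, Holds, restrictVal, Finset.singleton_subset_iff.mp hX]
  | tt => simp [semN, Holds]
  | ff => simp [semN, Holds]
  | neg b ih => exact not_congr (ih hX)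
  | conj b c ihb ihc =>
    exact and_congr (ihb (Finset.union_subset_left hX)) (ihc (Finset.union_subset_right hX))
  | disj b c ihb ihc =>
    exact or_congr (ihb (Finset.union_subset_left hX)) (ihc (Finset.union_subset_right hX))

theorem measurableSet_semN (b : NBF) (X : Finset ℕ) : MeasurableSet (b.semN X) := by
  induction b with
  | var i a =>
    simp only [semN, Set.ofPred_forall]
    exact MeasurableSet.iInter fun h => measurableSet_eq_fun (by fun_prop) measurable_const
  | tt => exact MeasurableSet.univ
  | ff => exact MeasurableSet.empty
  | neg b ih => exact ih.compl
  | conj b c ihb ihc => exact ihb.inter ihc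
  | disj b c ihb ihc => exact ihb.union ihc

theorem dependsOn_holds (b : NBF) : DependsOn b.Holds b.bits := by
  induction b with
  | var i a => exact fun v w h => congrArg (· = true) (h (a, i) (by simp [bits]))
  | tt => exact fun _ _ _ => rfl
  | ff => exact fun _ _ _ => rfl
  | neg b ih => exact fun v w h => congrArg Not (ih h)
  | conj b c ihb ihc =>
    exact fun v w h => congrArg₂ And (ihb fun p hp => h p (Finset.mem_union_left _ hp))
      (ihc fun p hp => h p (Finset.mem_union_right _ hp))
  | disj b c ihb ihc =>
    exact fun v w h => congrArg₂ Or (ihb fun p hp => h p (Finset.mem_union_left _ hp))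
      (ihc fun p hp => h p (Finset.mem_union_right _ hp))

/-- The decision node `(xₚ ∧ b) ∨ (¬xₚ ∧ c)`, which tests the bit `p` and continues with `b` or
`c`; it performs one step of a Shannon expansion. -/
def branch (p : ℕ × ℕ) (b c : NBF) : NBF :=
  .disj (.conj (.var p.2 p.1) b) (.conj (.neg (.var p.2 p.1)) c)

theorem holds_branch (p : ℕ × ℕ) (b c : NBF) (v : BitAssignment) :
    (branch p b c).Holds v ↔ if v p = true then b.Holds v else c.Holds v := by
  by_cases h : v p = true <;> simp [branch, Holds, h]

theorem bits_branch (p : ℕ × ℕ) (b c : NBF) :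
    (branch p b c).bits = insert p (b.bits ∪ c.bits) := by
  grind [branch, bits]

theorem exists_holds_iff_of_dependsOn {S : Finset (ℕ × ℕ)} {P : BitAssignment → Prop}
    (hP : DependsOn P S) : ∃ b : NBF, b.bits ⊆ S ∧ ∀ v, b.Holds v ↔ P v := by
  induction S using Finset.induction_on generalizing P with
  | empty =>
    have hconst (v : BitAssignment) : P v ↔ P fun _ => false := iff_of_eq (hP (by simp))
    by_cases h : P fun _ => false
    · exact ⟨.tt, by simp [bits], fun v => by simp [Holds, hconst v, h]⟩
    · exact ⟨.ff, by simp [bits], fun v => by simp [Holds, hconst v, h]⟩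
  | insert p S hp ih =>
    have hupdate (x : Bool) : DependsOn (fun v => P (Function.update v p x)) S :=
      Finset.erase_insert hp ▸ hP.update p x
    obtain ⟨b, hbS, hb⟩ := ih (hupdate true)
    obtain ⟨c, hcS, hc⟩ := ih (hupdate false)
    refine ⟨branch p b c, ?_, fun v => ?_⟩
    · rw [bits_branch]
      exact Finset.insert_subset_insert p (Finset.union_subset hbS hcS)
    · have hself := Function.update_eq_self p v
      rw [holds_branch, hb, hc]
      cases hv : v p <;> rw [hv] at hself <;> simp [hself]

theorem exists_holds_iff_section (b : NBF) {Y : Finset ℕ} (Q : Set (Val Y) → Prop) :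
    ∃ c : NBF, c.FN ⊆ b.FN \ Y ∧ ∀ v, c.Holds v ↔ Q {g | b.Holds (overlay v g)} := by
  obtain ⟨c, hcS, hc⟩ := exists_holds_iff_of_dependsOn (dependsOn_section b.dependsOn_holds Q)
  refine ⟨c, fun a ha => ?_, hc⟩
  rw [← image_fst_bits, Finset.mem_image] at ha
  obtain ⟨p, hp, rfl⟩ := ha
  obtain ⟨hpb, hpY⟩ := Finset.mem_filter.mp (hcS hp)
  rw [← image_fst_bits]
  exact Finset.mem_sdiff.mpr ⟨Finset.mem_image_of_mem _ hpb, hpY⟩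

theorem exists_setOf_proj_eq_semN (b : NBF) {Y : Finset ℕ} (Q : Set (Val Y) → Prop) :
    ∃ c : NBF, c.FN ⊆ b.FN \ Y ∧
      ∀ X, b.FN \ Y ⊆ X → {f : Val X | Q (proj f (b.semN (X ∪ Y)))} = c.semN X := by
  obtain ⟨c, hcFN, hc⟩ := b.exists_holds_iff_section Q
  refine ⟨c, hcFN, fun X hX => Set.ext ((restrictVal_surjective X).forall.mpr fun v => ?_)⟩
  have hbX : b.FN ⊆ X ∪ Y := sdiff_le_iff'.mp hX
  have hproj : proj (restrictVal X v) (b.semN (X ∪ Y)) = {g | b.Holds (overlay v g)} := by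
    ext g
    rw [proj, Set.mem_ofPred_eq, combine_restrictVal, restrictVal_mem_semN_iff hbX,
      Set.mem_ofPred_eq]
  rw [Set.mem_ofPred_eq, hproj, restrictVal_mem_semN_iff (hcFN.trans hX), hc]

end NBF

namespace CPL

theorem exists_setOf_proj_eq_semN {μ : Measure Cantor} {A : CPL} {b : NBF} (hFN : b.FN ⊆ A.FN)
    (hb : ∀ X, A.FN ⊆ X → A.semN μ X = b.semN X) {Y : Finset ℕ} (Q : Set (Val Y) → Prop) :
    ∃ c : NBF, c.FN ⊆ A.FN \ Y ∧
      ∀ X, A.FN \ Y ⊆ X → {f : Val X | Q (proj f (A.semN μ (X ∪ Y)))} = c.semN X := by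
  have hsdiff : b.FN \ Y ⊆ A.FN \ Y := Finset.sdiff_subset_sdiff hFN subset_rfl
  obtain ⟨c, hcFN, hc⟩ := b.exists_setOf_proj_eq_semN Q
  refine ⟨c, hcFN.trans hsdiff, fun X hX => ?_⟩
  have hAX : A.FN ⊆ X ∪ Y := sdiff_le_iff'.mp hX
  rw [hb _ hAX, hc X (hsdiff.trans hX)]

theorem exists_nbf_semN_eq (μ : Measure Cantor) (A : CPL) :
    ∃ b : NBF, b.FN ⊆ A.FN ∧ ∀ X, A.FN ⊆ X → A.semN μ X = b.semN X := by
  induction A with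
  | atom i a => exact ⟨.var i a, subset_rfl, fun _ _ => rfl⟩
  | neg A ih =>
    obtain ⟨b, hbFN, hb⟩ := ih
    exact ⟨.neg b, hbFN, fun X hX => congrArg compl (hb X hX)⟩
  | conj A B ihA ihB =>
    obtain ⟨b, hbFN, hb⟩ := ihA
    obtain ⟨c, hcFN, hc⟩ := ihB
    exact ⟨.conj b c, Finset.union_subset_union hbFN hcFN, fun X hX => congrArg₂ (· ∩ ·)
      (hb X (Finset.union_subset_left hX)) (hc X (Finset.union_subset_right hX))⟩
  | disj A B ihA ihB =>
    obtain ⟨b, hbFN, hb⟩ := ihA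
    obtain ⟨c, hcFN, hc⟩ := ihB
    exact ⟨.disj b c, Finset.union_subset_union hbFN hcFN, fun X hX => congrArg₂ (· ∪ ·)
      (hb X (Finset.union_subset_left hX)) (hc X (Finset.union_subset_right hX))⟩
  | cnt q a A ih =>
    obtain ⟨b, hbFN, hb⟩ := ih
    exact exists_setOf_proj_eq_semN hbFN hb fun S => qq q ≤ cantorPi μ {a} S
  | dnt q a A ih =>
    obtain ⟨b, hbFN, hb⟩ := ih
    exact exists_setOf_proj_eq_semN hbFN hb fun S => cantorPi μ {a} S < qq q

end CPL

theorem cpl_exists_boolean_formula_and_measurable_general (μ : Measure Cantor) (A : CPL) :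
    (∃ b : NBF, b.FN ⊆ A.FN ∧ ∀ X : Finset ℕ, A.FN ⊆ X → A.semN μ X = b.semN X) ∧
      ∀ X : Finset ℕ, A.FN ⊆ X → MeasurableSet (A.semN μ X) := by
  obtain ⟨b, hFN, hb⟩ := A.exists_nbf_semN_eq μ
  exact ⟨⟨b, hFN, hb⟩, fun X hX => hb X hX ▸ b.measurableSet_semN X⟩

/-- For every CPL formula `A` there is a named Boolean formula `b_A`
such that `⟦A⟧_X = ⟦b_A⟧_X` for every finite name set `X ⊇ FN(A) ∪ FN(b_A)`; in
particular, every interpretation `⟦A⟧_X` (for `X ⊇ FN(A)`) is a Borel-measurable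
subset of `(2^ω)^X`. -/
theorem cpl_exists_boolean_formula_and_measurable
    (μ : Measure Cantor) (hμ : IsCantorMeasure μ) (A : CPL) :
    (∃ b : NBF, ∀ X : Finset ℕ, A.FN ∪ b.FN ⊆ X → CPL.semN μ A X = NBF.semN b X) ∧
    (∀ X : Finset ℕ, A.FN ⊆ X → MeasurableSet (CPL.semN μ A X)) := by
  obtain ⟨⟨b, _, hb⟩, hmeas⟩ := cpl_exists_boolean_formula_and_measurable_general μ A
  exact ⟨⟨b, fun X hX => hb X (Finset.union_subset_left hX)⟩, hmeas⟩
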